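/- Under simple random sampling without replacement of s (size n) from U (size N), followed by simple random sampling without replacement of s₁ (size n₁) from s, the conditional inclusion probability π_{2i} = Pr(i ∈ s₂ | s₁) equals n₂/(N − n₁) for every i ∈ U \ s₁, where n₂ = n − n₁ and s₂ = s \ s₁. -/

import Mathlib

open Finset

/-!
Given `s₁ = t`, all samples `s ⊇ t` are equally likely, so the conditional probability is the
proportion of them that contain `i`. Those containing `t` are counted by `(N - n₁).choose (n - n₁)`
and those containing `insert i t` by `(N - n₁ - 1).choose (n - n₁ - 1)`; the absorption identity
`m * (m - 1).choose (k - 1) = m.choose k * k` gives the ratio.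
-/

section

variable {α : Type*} [DecidableEq α] {t u : Finset α} {i : α} {n : ℕ}

theorem card_filter_powersetCard_subset_and_mem_mul (htu : t ⊆ u) (hiu : i ∈ u) (hit : i ∉ t) :
    #{s ∈ u.powersetCard n | t ⊆ s ∧ i ∈ s} * (#u - #t)
      = (n - #t) * #{s ∈ u.powersetCard n | t ⊆ s} := by
  have hcard : #(insert i t) = #t + 1 := card_insert_of_notMem hit
  have hins : insert i t ⊆ u := insert_subset hiu htu
  have hlt : #t < #u := card_lt_card ((ssubset_iff_of_subset htu).mpr ⟨i, hiu, hit⟩)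
  simp only [and_comm (a := t ⊆ _), ← insert_subset_iff]
  rcases lt_or_ge #t n with htn | hnt
  · rw [card_filter_powersetCard_subset _ _ _ hins (by lia),
      card_filter_powersetCard_subset _ _ _ htu htn.le, hcard]
    obtain ⟨a, ha⟩ : ∃ a, #u - #t = a + 1 := Nat.exists_eq_add_one.mpr (Nat.sub_pos_of_lt hlt)
    obtain ⟨b, hb⟩ : ∃ b, n - #t = b + 1 := Nat.exists_eq_add_one.mpr (Nat.sub_pos_of_lt htn)
    rw [Nat.sub_add_eq, Nat.sub_add_eq, ha, hb, mul_comm, mul_comm (b + 1)]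
    exact Nat.add_one_mul_choose_eq a b
  · have hempty : {s ∈ u.powersetCard n | insert i t ⊆ s} = ∅ := by
      refine filter_eq_empty_iff.mpr fun s hs his => ?_
      have := card_le_card his
      have := (mem_powersetCard.mp hs).2
      lia
    rw [hempty, card_empty, Nat.sub_eq_zero_of_le hnt, zero_mul, zero_mul]

theorem card_filter_powersetCard_subset_pos (htu : t ⊆ u) (htn : #t ≤ n) (hnu : n ≤ #u) :
    0 < #{s ∈ u.powersetCard n | t ⊆ s} := by
  rw [card_filter_powersetCard_subset _ _ _ htu htn]
  exact Nat.choose_pos (Nat.sub_le_sub_right hnu _)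

theorem card_filter_powersetCard_subset_and_mem_div {K : Type*} [Field K] [CharZero K]
    (htu : t ⊆ u) (hiu : i ∈ u) (hit : i ∉ t) (htn : #t ≤ n) (hnu : n ≤ #u) :
    (#{s ∈ u.powersetCard n | t ⊆ s ∧ i ∈ s} : K) / #{s ∈ u.powersetCard n | t ⊆ s}
      = ((n : K) - #t) / ((#u : K) - #t) := by
  have hlt : #t < #u := card_lt_card ((ssubset_iff_of_subset htu).mpr ⟨i, hiu, hit⟩)
  have hcard : (#{s ∈ u.powersetCard n | t ⊆ s} : K) ≠ 0 :=
    Nat.cast_ne_zero.mpr (card_filter_powersetCard_subset_pos htu htn hnu).ne'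
  have hsub : (#u : K) - #t ≠ 0 := sub_ne_zero.mpr (Nat.cast_injective.ne hlt.ne')
  rw [div_eq_div_iff hcard hsub, ← Nat.cast_sub htn, ← Nat.cast_sub hlt.le]
  exact_mod_cast card_filter_powersetCard_subset_and_mem_mul htu hiu hit

theorem sum_const_div_sum_const {ι K : Type*} [DivisionSemiring K] (s t : Finset ι) {c : K}
    (hc : c ≠ 0) : (∑ _ ∈ s, c) / (∑ _ ∈ t, c) = (#s : K) / #t := by
  simp only [sum_const, nsmul_eq_mul, mul_div_mul_right _ _ hc]

end

/-- Under SRS without replacement of `s` (size `n`) from `U` (size `N`) followed by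
SRS without replacement of `s₁` (size `n₁`) from `s`, the conditional inclusion
probability `π_{2i} = Pr(i ∈ s₂ | s₁)` equals `n₂/(N - n₁)` for every `i ∉ s₁`. -/
theorem stmt_8 {ι : Type*} [Fintype ι] [DecidableEq ι] (N n n₁ : ℕ)
    (hN : Fintype.card ι = N) (h1 : n₁ < n) (h2 : n < N)
    (t : Finset ι) (ht : t.card = n₁) (i : ι) (hi : i ∉ t) :
    (∑ s ∈ (univ.powersetCard n).filter (fun s => t ⊆ s ∧ i ∈ s),
        ((N.choose n : ℝ))⁻¹ * ((n.choose n₁ : ℝ))⁻¹)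
      / (∑ s ∈ (univ.powersetCard n).filter (fun s => t ⊆ s),
        ((N.choose n : ℝ))⁻¹ * ((n.choose n₁ : ℝ))⁻¹)
      = ((n : ℝ) - n₁) / ((N : ℝ) - n₁) := by
  subst hN ht
  have hweight : (((Fintype.card ι).choose n : ℝ))⁻¹ * ((n.choose #t : ℝ))⁻¹ ≠ 0 :=
    mul_ne_zero (inv_ne_zero (Nat.cast_ne_zero.mpr (Nat.choose_ne_zero h2.le)))
      (inv_ne_zero (Nat.cast_ne_zero.mpr (Nat.choose_ne_zero h1.le)))
  rw [sum_const_div_sum_const _ _ hweight]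
  exact card_filter_powersetCard_subset_and_mem_div (subset_univ t) (mem_univ i) hi h1.le h2.le
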